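/- Let g be a holomorphic function on the upper half-plane ℍ = {z : Im z > 0} satisfying g(z+1) = g(z) for all z ∈ ℍ, with finite Bloch norm sup_{z∈ℍ} 2 Im(z)|g'(z)| < ∞, and such that g(x+iy) → 0 uniformly in x as y → ∞. For p ∈ ℂ define β_g(p) := limsup_{y→0⁺} [ log( ∫₀¹ exp( Re(p·g(x+iy)) ) dx ) / log(1/y) ]. Suppose 0 ≤ m ≤ M are real numbers and there exist n₀ ≥ 2 and y₀ ∈ (0,1] such that for every real n ≥ n₀, every α ≥ 1, and every box B of type (n, α) contained in the strip {z : 0 < Im z ≤ y₀}, one has m ≤ ⨍_B (2 Im(z)|g'(z)|)² dA(z)/Im z ≤ M. Then m ≤ liminf_{p→0, p≠0} β_g(p)/(|p|²/4) ≤ limsup_{p→0, p≠0} β_g(p)/(|p|²/4) ≤ M. -/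

import Mathlib

open Complex MeasureTheory Filter Topology Set

/-- A box of type `(n, α)` in the upper half-plane: the rectangle
`[x₀, x₀ + α t] × [t/n, t]`. -/
noncomputable def blochBox (x₀ t n α : ℝ) : Set ℂ :=
  {z : ℂ | z.re ∈ Set.Icc x₀ (x₀ + α * t) ∧ z.im ∈ Set.Icc (t / n) t}

/-- The integral means spectrum of `exp (p • g)`:
`β_g(p) = limsup_{y→0⁺} log(∫₀¹ exp(Re(p g(x+iy))) dx) / log(1/y)`. -/
noncomputable def betaSpec (g : ℂ → ℂ) (p : ℂ) : ℝ :=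
  Filter.limsup
    (fun y : ℝ =>
      Real.log (∫ x in (0:ℝ)..1,
        Real.exp ((p * g ((x : ℂ) + (y : ℂ) * Complex.I)).re)) /
      Real.log (1 / y)) (𝓝[>] (0:ℝ))

noncomputable def zz (x y : ℝ) : ℂ := (x : ℂ) + (y : ℂ) * Complex.I

lemma zz_im (x y : ℝ) : (zz x y).im = y := by simp [zz]
lemma zz_re (x y : ℝ) : (zz x y).re = x := by simp [zz]
lemma zz_cont : Continuous (fun q : ℝ × ℝ => zz q.1 q.2) := by unfold zz; fun_prop
lemma zz_diff : Differentiable ℝ (fun q : ℝ × ℝ => zz q.1 q.2) := by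
  have : (fun q : ℝ × ℝ => zz q.1 q.2) = fun q => Complex.equivRealProdCLM.symm q := by
    funext q
    apply Complex.ext <;> simp [zz]
  rw [this]
  exact Complex.equivRealProdCLM.symm.differentiable

lemma isOpen_H : IsOpen {z : ℂ | 0 < z.im} := isOpen_lt continuous_const Complex.continuous_im

noncomputable def uu (g : ℂ → ℂ) (p : ℂ) (x y : ℝ) : ℝ := Real.exp ((p * g (zz x y)).re)
noncomputable def vv (g : ℂ → ℂ) (x y : ℝ) : ℝ := y * ‖deriv g (zz x y)‖ ^ 2
noncomputable def ff (g : ℂ → ℂ) (p : ℂ) (q : ℝ × ℝ) : ℝ :=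
  q.2 * (p * deriv g (zz q.1 q.2)).re * uu g p q.1 q.2
noncomputable def gg (g : ℂ → ℂ) (p : ℂ) (q : ℝ × ℝ) : ℝ :=
  -((1 + q.2 * (p * deriv g (zz q.1 q.2)).im) * uu g p q.1 q.2)
noncomputable def JJ (g : ℂ → ℂ) (p : ℂ) (y : ℝ) : ℝ := - ∫ x in (0:ℝ)..1, gg g p (x, y)
noncomputable def II (g : ℂ → ℂ) (p : ℂ) (y : ℝ) : ℝ := ∫ x in (0:ℝ)..1, uu g p x y

lemma uu_pos (g p x y) : 0 < uu g p x y := Real.exp_pos _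

lemma int_on {F : ℝ × ℝ → ℝ} (hF : ContinuousOn F {q | 0 < q.2}) {a b c d : ℝ} (hc : 0 < c) :
    IntegrableOn F (Icc a b ×ˢ Icc c d) := by
  apply (hF.mono _).integrableOn_compact (isCompact_Icc.prod isCompact_Icc)
  rintro ⟨x, y⟩ ⟨_, h⟩
  exact lt_of_lt_of_le hc h.1

lemma comp_diff {g : ℂ → ℂ} (hg : DifferentiableOn ℂ g {z : ℂ | 0 < z.im})
    (q : ℝ × ℝ) (hq : 0 < q.2) :
    DifferentiableAt ℝ (fun q : ℝ × ℝ => g (zz q.1 q.2)) q := by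
  have h1 : DifferentiableAt ℂ g (zz q.1 q.2) :=
    hg.differentiableAt (isOpen_H.mem_nhds (by simpa [zz_im] using hq))
  exact (h1.restrictScalars ℝ).comp q (zz_diff q)

lemma re_dx {g : ℂ → ℂ} (hg : DifferentiableOn ℂ g {z : ℂ | 0 < z.im})
    (p : ℂ) {x y : ℝ} (hy : 0 < y) :
    HasDerivAt (fun s : ℝ => (p * g (zz s y)).re) ((p * deriv g (zz x y)).re) x := by
  have h1 : HasDerivAt g (deriv g (zz x y)) (zz x y) :=
    (hg.differentiableAt (isOpen_H.mem_nhds (by simpa [zz_im] using hy))).hasDerivAt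
  have h2 : HasDerivAt (fun s : ℝ => zz s y) 1 x := by
    unfold zz
    exact (Complex.ofRealCLM.hasDerivAt (x := x)).add_const _
  have h3 := (h1.comp x h2).const_mul p
  have := Complex.reCLM.hasFDerivAt.comp_hasDerivAt x h3
  rw [mul_one] at this
  exact this

lemma re_dy {g : ℂ → ℂ} (hg : DifferentiableOn ℂ g {z : ℂ | 0 < z.im})
    (p : ℂ) {x y : ℝ} (hy : 0 < y) :
    HasDerivAt (fun s : ℝ => (p * g (zz x s)).re) (-(p * deriv g (zz x y)).im) y := by
  have h1 : HasDerivAt g (deriv g (zz x y)) (zz x y) :=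
    (hg.differentiableAt (isOpen_H.mem_nhds (by simpa [zz_im] using hy))).hasDerivAt
  have h2 : HasDerivAt (fun s : ℝ => zz x s) Complex.I y := by
    unfold zz
    simpa using ((Complex.ofRealCLM.hasDerivAt (x := y)).mul_const Complex.I).const_add (x : ℂ)
  have h3 := (h1.comp y h2).const_mul p
  have := Complex.reCLM.hasFDerivAt.comp_hasDerivAt y h3
  have e : Complex.reCLM (p * (deriv g (zz x y) * Complex.I)) = -(p * deriv g (zz x y)).im := by
    simp
    ring
  rw [e] at this
  exact this

lemma im_dy {g : ℂ → ℂ} (hg : DifferentiableOn ℂ g {z : ℂ | 0 < z.im})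
    (p : ℂ) {x y : ℝ} (hy : 0 < y) :
    HasDerivAt (fun s : ℝ => (p * g (zz x s)).im) ((p * deriv g (zz x y)).re) y := by
  have h := re_dy hg (-Complex.I * p) (x := x) hy
  convert h using 1
  · funext s; simp; try ring
  · simp; try ring

lemma deriv_diffOn {g : ℂ → ℂ} (hg : DifferentiableOn ℂ g {z : ℂ | 0 < z.im})
    : DifferentiableOn ℂ (deriv g) {z : ℂ | 0 < z.im} := hg.deriv isOpen_H

lemma uu_diff {g : ℂ → ℂ} (hg : DifferentiableOn ℂ g {z : ℂ | 0 < z.im})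
    (p : ℂ) (q : ℝ × ℝ) (hq : 0 < q.2) :
    DifferentiableAt ℝ (fun q : ℝ × ℝ => uu g p q.1 q.2) q := by
  have h1 := comp_diff hg q hq
  have h2 : DifferentiableAt ℝ (fun q : ℝ × ℝ => (p * g (zz q.1 q.2)).re) q :=
    Complex.reCLM.differentiableAt.comp q (h1.const_mul p)
  exact h2.exp

lemma ff_diff {g : ℂ → ℂ} (hg : DifferentiableOn ℂ g {z : ℂ | 0 < z.im})
    (p : ℂ) (q : ℝ × ℝ) (hq : 0 < q.2) : DifferentiableAt ℝ (ff g p) q := by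
  have h1 := comp_diff (deriv_diffOn hg) q hq
  have h2 : DifferentiableAt ℝ (fun q : ℝ × ℝ => (p * deriv g (zz q.1 q.2)).re) q :=
    Complex.reCLM.differentiableAt.comp q (h1.const_mul p)
  exact (differentiableAt_snd.mul h2).mul (uu_diff hg p q hq)

lemma gg_diff {g : ℂ → ℂ} (hg : DifferentiableOn ℂ g {z : ℂ | 0 < z.im})
    (p : ℂ) (q : ℝ × ℝ) (hq : 0 < q.2) : DifferentiableAt ℝ (gg g p) q := by
  have h1 := comp_diff (deriv_diffOn hg) q hq
  have h2 : DifferentiableAt ℝ (fun q : ℝ × ℝ => (p * deriv g (zz q.1 q.2)).im) q :=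
    Complex.imCLM.differentiableAt.comp q (h1.const_mul p)
  exact (((differentiableAt_snd.mul h2).const_add 1).mul (uu_diff hg p q hq)).neg

lemma vv_cont {g : ℂ → ℂ} (hg : DifferentiableOn ℂ g {z : ℂ | 0 < z.im})
    : ContinuousOn (fun q : ℝ × ℝ => vv g q.1 q.2) {q | 0 < q.2} := by
  intro q hq
  have h1 := (comp_diff (deriv_diffOn hg) q hq).continuousAt
  unfold vv
  exact (continuousAt_snd.mul (h1.norm.pow 2)).continuousWithinAt

lemma uu_cont {g : ℂ → ℂ} (hg : DifferentiableOn ℂ g {z : ℂ | 0 < z.im})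
    (p : ℂ) : ContinuousOn (fun q : ℝ × ℝ => uu g p q.1 q.2) {q | 0 < q.2} :=
  fun q hq => (uu_diff hg p q hq).continuousAt.continuousWithinAt

lemma uu_contx {g : ℂ → ℂ} (hg : DifferentiableOn ℂ g {z : ℂ | 0 < z.im})
    (p : ℂ) {y : ℝ} (hy : 0 < y) : Continuous (fun x : ℝ => uu g p x y) :=
  (uu_cont hg p).comp_continuous (f := fun x : ℝ => (x, y)) (by fun_prop) (fun _ => hy)

lemma gg_contx {g : ℂ → ℂ} (hg : DifferentiableOn ℂ g {z : ℂ | 0 < z.im})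
    (p : ℂ) {y : ℝ} (hy : 0 < y) : Continuous (fun x : ℝ => gg g p (x, y)) := by
  have : ContinuousOn (gg g p) {q | 0 < q.2} :=
    fun q hq => (gg_diff hg p q hq).continuousAt.continuousWithinAt
  exact this.comp_continuous (f := fun x : ℝ => (x, y)) (by fun_prop) (fun _ => hy)

lemma div_eq {g : ℂ → ℂ} (hg : DifferentiableOn ℂ g {z : ℂ | 0 < z.im})
    (p : ℂ) (q : ℝ × ℝ) (hq : 0 < q.2) :
    fderiv ℝ (ff g p) q (1, 0) + fderiv ℝ (gg g p) q (0, 1) =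
      ‖p‖ ^ 2 * (vv g q.1 q.2 * uu g p q.1 q.2) := by
  obtain ⟨x, y⟩ := q
  simp only at hq
  have hgd := deriv_diffOn hg
  have hl1 : HasDerivAt (fun s : ℝ => (s, y)) ((1, 0) : ℝ × ℝ) x :=
    (hasDerivAt_id x).prodMk (hasDerivAt_const x y)
  have hl2 : HasDerivAt (fun s : ℝ => (x, s)) ((0, 1) : ℝ × ℝ) y :=
    (hasDerivAt_const y x).prodMk (hasDerivAt_id y)
  have e1 := (ff_diff hg p (x, y) hq).hasFDerivAt.comp_hasDerivAt x hl1
  have e2 := (gg_diff hg p (x, y) hq).hasFDerivAt.comp_hasDerivAt y hl2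
  have d1 := ((re_dx hgd p (x := x) hq).const_mul y).mul (re_dx hg p (x := x) hq).exp
  have d2 := ((((hasDerivAt_id y).mul (im_dy hgd p (x := x) hq)).const_add 1).mul
    (re_dy hg p (x := x) hq).exp).neg
  have e1' := e1.unique d1
  have e2' := e2.unique d2
  simp only [Pi.mul_apply, id] at e2'
  rw [e1', e2']
  have hn : ‖p‖ ^ 2 * ‖deriv g (zz x y)‖ ^ 2 =
      (p * deriv g (zz x y)).re ^ 2 + (p * deriv g (zz x y)).im ^ 2 := by
    rw [← mul_pow, ← norm_mul, Complex.sq_norm, Complex.normSq_apply]; ring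
  simp only [vv, uu]
  calc _ = y * ((p * deriv g (zz x y)).re ^ 2 + (p * deriv g (zz x y)).im ^ 2) *
        Real.exp ((p * g (zz x y)).re) := by ring
    _ = _ := by rw [← hn]; ring

lemma green {g : ℂ → ℂ} (hg : DifferentiableOn ℂ g {z : ℂ | 0 < z.im})
    (hper : ∀ z : ℂ, 0 < z.im → g (z + 1) = g z) (p : ℂ) {a b : ℝ} (ha : 0 < a)
    (hab : a ≤ b) :
    JJ g p a - JJ g p b =
      ‖p‖ ^ 2 * ∫ q in Icc (0:ℝ) 1 ×ˢ Icc a b, vv g q.1 q.2 * uu g p q.1 q.2 := by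
  have hsub : ∀ q ∈ Icc (0:ℝ) 1 ×ˢ Icc a b, 0 < q.2 := fun q hq => lt_of_lt_of_le ha hq.2.1
  have hcon := (vv_cont hg).mul (uu_cont hg p)
  have hI : IntegrableOn (fun q => fderiv ℝ (ff g p) q (1, 0) + fderiv ℝ (gg g p) q (0, 1))
      (Icc (0:ℝ) 1 ×ˢ Icc a b) := by
    refine IntegrableOn.congr_fun (Integrable.const_mul (int_on hcon ha) (‖p‖ ^ 2)) ?_
      (measurableSet_Icc.prod measurableSet_Icc)
    intro q hq
    exact (div_eq hg p q (hsub q hq)).symm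
  have key := integral_divergence_prod_Icc_of_hasFDerivAt_off_countable_of_le
    (ff g p) (gg g p) (fderiv ℝ (ff g p)) (fderiv ℝ (gg g p)) ((0:ℝ), a) ((1:ℝ), b)
    ⟨zero_le_one, hab⟩ ∅ countable_empty
    (fun q hq => (ff_diff hg p q (lt_of_lt_of_le ha hq.1.2)).continuousAt.continuousWithinAt)
    (fun q hq => (gg_diff hg p q (lt_of_lt_of_le ha hq.1.2)).continuousAt.continuousWithinAt)
    (fun q hq => (ff_diff hg p q (ha.trans hq.1.2.1)).hasFDerivAt)
    (fun q hq => (gg_diff hg p q (ha.trans hq.1.2.1)).hasFDerivAt)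
    (by rw [← Icc_prod_Icc]; exact hI)
  rw [← Icc_prod_Icc] at key
  rw [setIntegral_congr_fun (measurableSet_Icc.prod measurableSet_Icc)
    (fun q hq => div_eq hg p q (hsub q hq)), integral_const_mul] at key
  have hz : ∀ y, zz 1 y = zz 0 y + 1 := fun y => by simp [zz]; ring
  have hper' : ∀ y ∈ Set.uIcc a b, ff g p (1, y) = ff g p (0, y) := by
    intro y hy
    rw [Set.uIcc_of_le hab] at hy
    have hy0 : 0 < y := lt_of_lt_of_le ha hy.1
    have h1 : g (zz 1 y) = g (zz 0 y) := by rw [hz]; exact hper _ (by simpa [zz_im])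
    have h2 : deriv g (zz 1 y) = deriv g (zz 0 y) := by
      rw [hz, ← deriv_comp_add_const]
      apply Filter.EventuallyEq.deriv_eq
      filter_upwards [isOpen_H.mem_nhds (show 0 < (zz 0 y).im by simpa [zz_im])] with w hw
      exact hper w hw
    simp only [ff, uu, h1, h2]
  rw [key]
  simp only [intervalIntegral.integral_congr hper', JJ]
  ring
lemma vv_nonneg (g : ℂ → ℂ) (x : ℝ) {y : ℝ} (hy : 0 < y) : 0 ≤ vv g x y := by
  unfold vv; positivity


lemma box_int (g : ℂ → ℂ) (x₀ t n α : ℝ) (ht : 0 < t) (hn : 0 < n) :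
    ∫ z in blochBox x₀ t n α, (2 * z.im * ‖deriv g z‖)^2 / z.im =
      4 * ∫ q in Icc x₀ (x₀ + α * t) ×ˢ Icc (t / n) t, vv g q.1 q.2 := by
  have h := Complex.volume_preserving_equiv_real_prod.setIntegral_preimage_emb
    Complex.measurableEquivRealProd.measurableEmbedding
    (fun q : ℝ × ℝ => vv g q.1 q.2) (Icc x₀ (x₀ + α * t) ×ˢ Icc (t / n) t)
  rw [← h, ← integral_const_mul]
  have hset : (Complex.measurableEquivRealProd ⁻¹' Icc x₀ (x₀ + α * t) ×ˢ Icc (t / n) t)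
      = blochBox x₀ t n α := by
    ext z
    simp [blochBox, Complex.measurableEquivRealProd_apply]
    tauto
  rw [hset]
  apply setIntegral_congr_fun
  · rw [← hset]
    exact Complex.measurableEquivRealProd.measurable (measurableSet_Icc.prod measurableSet_Icc)
  · intro z hz
    have hz0 : 0 < z.im := lt_of_lt_of_le (div_pos ht hn) hz.2.1
    have : zz z.re z.im = z := by apply Complex.ext <;> simp [zz]
    simp only [Complex.measurableEquivRealProd_apply, vv, this]
    field_simp
    ring

lemma split_int {F : ℝ × ℝ → ℝ} (hF : ContinuousOn F {q | 0 < q.2}) {c d : ℝ} (hc : 0 < c)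
    {N : ℕ} (hN : 0 < N) :
    ∑ k ∈ Finset.range N, ∫ q in Icc ((k:ℝ) / N) (((k + 1 : ℕ) : ℝ) / N) ×ˢ Icc c d, F q
      = ∫ q in Icc (0:ℝ) 1 ×ˢ Icc c d, F q := by
  have hN' : (0:ℝ) < N := by exact_mod_cast hN
  have key : ∀ a b : ℝ, a ≤ b → ∫ q in Icc a b ×ˢ Icc c d, F q =
      ∫ x in a..b, ∫ y in Icc c d, F (x, y) := by
    intro a b hab
    rw [intervalIntegral.integral_of_le hab, ← integral_Icc_eq_integral_Ioc]
    exact setIntegral_prod F (int_on hF hc)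
  have hint : ∀ a b : ℝ, a ≤ b →
      IntervalIntegrable (fun x => ∫ y in Icc c d, F (x, y)) volume a b := by
    intro a b hab
    rw [intervalIntegrable_iff_integrableOn_Icc_of_le hab]
    have h : IntegrableOn F (Icc a b ×ˢ Icc c d) (volume.prod volume) := int_on hF hc
    rw [IntegrableOn, ← Measure.prod_restrict] at h
    exact h.integral_prod_left
  have hmono : ∀ k : ℕ, ((k:ℝ) / N) ≤ (((k + 1 : ℕ) : ℝ) / N) := by
    intro k
    gcongr
    omega
  rw [key 0 1 zero_le_one]
  have := intervalIntegral.sum_integral_adjacent_intervals (μ := volume)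
    (f := fun x => ∫ y in Icc c d, F (x, y)) (a := fun k : ℕ => (k:ℝ) / N) (n := N)
    (fun k _ => hint _ _ (hmono k))
  simp only [Nat.cast_zero, zero_div, div_self hN'.ne'] at this
  rw [← this]
  exact Finset.sum_congr rfl fun k _ => key _ _ (hmono k)


lemma osc {g : ℂ → ℂ} (hg : DifferentiableOn ℂ g {z : ℂ | 0 < z.im})
    {K : ℝ} (hK0 : 0 ≤ K) (hK : ∀ z : ℂ, 0 < z.im → 2 * z.im * ‖deriv g z‖ ≤ K)
    (p : ℂ) {t n : ℝ} (ht : 0 < t) (hn : 1 ≤ n) {x₀ w : ℝ} (hw : w ≤ 2 * t)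
    {x y x' y' : ℝ} (hx : x ∈ Icc x₀ (x₀ + w)) (hy : y ∈ Icc (t / n) t)
    (hx' : x' ∈ Icc x₀ (x₀ + w)) (hy' : y' ∈ Icc (t / n) t) :
    uu g p x y ≤ Real.exp (‖p‖ * (3 * K * n / 2)) * uu g p x' y' := by
  have hn0 : 0 < n := by linarith
  have htn : 0 < t / n := div_pos ht hn0
  set S : Set ℂ := {z : ℂ | t / n ≤ z.im} with hS
  have hconv : Convex ℝ S := convex_halfSpace_im_ge (t / n)
  have hmem : ∀ z ∈ S, 0 < z.im := fun z hz => lt_of_lt_of_le htn hz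
  have hd : ∀ z ∈ S, ‖deriv g z‖ ≤ K * n / (2 * t) := by
    intro z hz
    have h0 := hmem z hz
    have h1 := hK z h0
    have h2 : 2 * (t / n) * ‖deriv g z‖ ≤ K :=
      le_trans (by have : t / n ≤ z.im := hz
                   gcongr) h1
    rw [le_div_iff₀ (by positivity)]
    calc ‖deriv g z‖ * (2 * t) = (2 * (t / n) * ‖deriv g z‖) * n := by field_simp
      _ ≤ K * n := by gcongr
  have h1 := hconv.norm_image_sub_le_of_norm_deriv_le (f := g) (x := zz x' y') (y := zz x y)
    (fun z hz => hg.differentiableAt (isOpen_H.mem_nhds (hmem z hz))) hd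
    (by simpa [hS, zz_im] using hy'.1) (by simpa [hS, zz_im] using hy.1)
  have h2 : ‖zz x y - zz x' y'‖ ≤ 3 * t := by
    refine (Complex.norm_le_abs_re_add_abs_im _).trans ?_
    simp only [Complex.sub_re, Complex.sub_im, zz_re, zz_im]
    have a1 : |x - x'| ≤ 2 * t := by
      rw [abs_le]; constructor <;> linarith [hx.1, hx.2, hx'.1, hx'.2]
    have a2 : |y - y'| ≤ t := by
      rw [abs_le]; constructor <;> linarith [hy.1, hy.2, hy'.1, hy'.2]
    linarith
  have h3 : ‖g (zz x y) - g (zz x' y')‖ ≤ 3 * K * n / 2 := by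
    refine h1.trans ?_
    calc _ ≤ K * n / (2 * t) * (3 * t) := by gcongr
      _ = _ := by field_simp
  have h4 : (p * g (zz x y)).re ≤ ‖p‖ * (3 * K * n / 2) + (p * g (zz x' y')).re := by
    have : (p * g (zz x y)).re - (p * g (zz x' y')).re = (p * (g (zz x y) - g (zz x' y'))).re := by
      rw [mul_sub, Complex.sub_re]
    have h5 := (Complex.re_le_norm (p * (g (zz x y) - g (zz x' y'))))
    rw [norm_mul] at h5
    have : ‖p‖ * ‖g (zz x y) - g (zz x' y')‖ ≤ ‖p‖ * (3 * K * n / 2) := by gcongr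
    linarith
  unfold uu
  rw [← Real.exp_add]
  exact Real.exp_le_exp.mpr h4

lemma J_bounds {g : ℂ → ℂ} (hg : DifferentiableOn ℂ g {z : ℂ | 0 < z.im})
    {K : ℝ} (hK : ∀ z : ℂ, 0 < z.im → 2 * z.im * ‖deriv g z‖ ≤ K)
    (p : ℂ) {y : ℝ} (hy : 0 < y) :
    (1 - ‖p‖ * K / 2) * II g p y ≤ JJ g p y ∧ JJ g p y ≤ (1 + ‖p‖ * K / 2) * II g p y := by
  unfold JJ II
  rw [← intervalIntegral.integral_neg, ← intervalIntegral.integral_const_mul,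
    ← intervalIntegral.integral_const_mul]
  have c1 := uu_contx hg p hy
  have c2 := gg_contx hg p hy
  have key : ∀ x, |y * (p * deriv g (zz x y)).im| ≤ ‖p‖ * K / 2 := by
    intro x
    have h1 := Complex.abs_im_le_norm (p * deriv g (zz x y))
    rw [norm_mul] at h1
    have h2 := hK (zz x y) (by simpa [zz_im])
    rw [zz_im] at h2
    rw [abs_mul, abs_of_pos hy]
    calc _ ≤ y * (‖p‖ * ‖deriv g (zz x y)‖) := by gcongr
      _ = ‖p‖ * (2 * y * ‖deriv g (zz x y)‖) / 2 := by ring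
      _ ≤ _ := by gcongr
  constructor
  · apply intervalIntegral.integral_mono_on zero_le_one
      ((c1.const_mul _).intervalIntegrable _ _) (c2.neg.intervalIntegrable _ _)
    intro x _
    simp only [gg, Pi.neg_apply, neg_neg]
    have := (abs_le.mp (key x)).1
    exact mul_le_mul_of_nonneg_right (by linarith) (uu_pos g p x y).le
  · apply intervalIntegral.integral_mono_on zero_le_one
      (c2.neg.intervalIntegrable _ _) ((c1.const_mul _).intervalIntegrable _ _)
    intro x _
    simp only [gg, Pi.neg_apply, neg_neg]
    have := (abs_le.mp (key x)).2
    exact mul_le_mul_of_nonneg_right (by linarith) (uu_pos g p x y).le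

lemma I_pos {g : ℂ → ℂ} (hg : DifferentiableOn ℂ g {z : ℂ | 0 < z.im})
    (p : ℂ) {y : ℝ} (hy : 0 < y) : 0 < II g p y :=
  intervalIntegral.intervalIntegral_pos_of_pos ((uu_contx hg p hy).intervalIntegrable _ _)
    (fun x => uu_pos g p x y) zero_lt_one

lemma box_step {g : ℂ → ℂ} (hg : DifferentiableOn ℂ g {z : ℂ | 0 < z.im})
    {K : ℝ} (hK0 : 0 ≤ K) (hK : ∀ z : ℂ, 0 < z.im → 2 * z.im * ‖deriv g z‖ ≤ K)
    (p : ℂ) {m M t n w x₀ : ℝ} (hm : 0 ≤ m) (hM : 0 ≤ M) (ht : 0 < t) (hn : 1 ≤ n)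
    (hw0 : 0 < w) (hw : w ≤ 2 * t)
    (h1 : w * m ≤ ∫ q in Icc x₀ (x₀ + w) ×ˢ Icc (t / n) t, vv g q.1 q.2)
    (h2 : ∫ q in Icc x₀ (x₀ + w) ×ˢ Icc (t / n) t, vv g q.1 q.2 ≤ w * M) :
    m * Real.exp (-(2 * (‖p‖ * (3 * K * n / 2)))) * (∫ x in x₀..(x₀ + w), uu g p x t) ≤
      ∫ q in Icc x₀ (x₀ + w) ×ˢ Icc (t / n) t, vv g q.1 q.2 * uu g p q.1 q.2 ∧
    ∫ q in Icc x₀ (x₀ + w) ×ˢ Icc (t / n) t, vv g q.1 q.2 * uu g p q.1 q.2 ≤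
      M * Real.exp (2 * (‖p‖ * (3 * K * n / 2))) * (∫ x in x₀..(x₀ + w), uu g p x t) := by
  have hn0 : 0 < n := by linarith
  have htn : 0 < t / n := div_pos ht hn0
  have htt : t ∈ Icc (t / n) t := ⟨div_le_self ht.le hn, le_rfl⟩
  have hxx : x₀ ∈ Icc x₀ (x₀ + w) := ⟨le_rfl, by linarith⟩
  set D := ‖p‖ * (3 * K * n / 2) with hD
  have hms : MeasurableSet (Icc x₀ (x₀ + w) ×ˢ Icc (t / n) t) :=
    measurableSet_Icc.prod measurableSet_Icc
  have cv := vv_cont hg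
  have cu := uu_cont hg p
  have iu := (uu_contx hg p ht).intervalIntegrable (μ := volume) x₀ (x₀ + w)
  have u0 := uu_pos g p x₀ t
  -- bounds for the one-dimensional integral
  have a1 : (∫ x in x₀..(x₀ + w), uu g p x t) ≤ w * (Real.exp D * uu g p x₀ t) := by
    calc _ ≤ ∫ x in x₀..(x₀ + w), Real.exp D * uu g p x₀ t := by
          apply intervalIntegral.integral_mono_on (by linarith) iu (by simp)
          intro x hx
          exact osc hg hK0 hK p ht hn hw hx htt hxx htt
      _ = _ := by simp; ring
  have a2 : w * uu g p x₀ t ≤ Real.exp D * (∫ x in x₀..(x₀ + w), uu g p x t) := by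
    calc w * uu g p x₀ t = ∫ x in x₀..(x₀ + w), uu g p x₀ t := by simp
      _ ≤ ∫ x in x₀..(x₀ + w), Real.exp D * uu g p x t := by
          apply intervalIntegral.integral_mono_on (by linarith) (by simp) (iu.const_mul _)
          intro x hx
          exact osc hg hK0 hK p ht hn hw hxx htt hx htt
      _ = _ := by simp
  have b1 : uu g p x₀ t * ∫ q in Icc x₀ (x₀ + w) ×ˢ Icc (t / n) t, vv g q.1 q.2 ≤
      Real.exp D * ∫ q in Icc x₀ (x₀ + w) ×ˢ Icc (t / n) t, vv g q.1 q.2 * uu g p q.1 q.2 := by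
    rw [← integral_const_mul, ← integral_const_mul]
    apply setIntegral_mono_on (Integrable.const_mul (int_on cv htn) _)
      (Integrable.const_mul (int_on (cv.mul cu) htn) _) hms
    intro q hq
    have hv := vv_nonneg g q.1 (lt_of_lt_of_le htn hq.2.1)
    have := osc hg hK0 hK p ht hn hw hxx htt hq.1 hq.2
    calc _ ≤ (Real.exp D * uu g p q.1 q.2) * vv g q.1 q.2 := by gcongr
      _ = _ := by simp only [Pi.mul_apply]; ring
  have b2 : ∫ q in Icc x₀ (x₀ + w) ×ˢ Icc (t / n) t, vv g q.1 q.2 * uu g p q.1 q.2 ≤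
      (Real.exp D * uu g p x₀ t) * ∫ q in Icc x₀ (x₀ + w) ×ˢ Icc (t / n) t, vv g q.1 q.2 := by
    rw [← integral_const_mul]
    apply setIntegral_mono_on (int_on (cv.mul cu) htn)
      (Integrable.const_mul (int_on cv htn) _) hms
    intro q hq
    have hv := vv_nonneg g q.1 (lt_of_lt_of_le htn hq.2.1)
    have := osc hg hK0 hK p ht hn hw hq.1 hq.2 hxx htt
    calc _ ≤ vv g q.1 q.2 * (Real.exp D * uu g p x₀ t) := by
          simp only [Pi.mul_apply]; gcongr
      _ = _ := by ring
  set E := Real.exp D with hE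
  have hEpos : 0 < E := Real.exp_pos _
  have e2 : Real.exp (2 * D) = E * E := by rw [hE, ← Real.exp_add]; ring_nf
  rw [Real.exp_neg, e2]
  set A := ∫ q in Icc x₀ (x₀ + w) ×ˢ Icc (t / n) t, vv g q.1 q.2
  set B := ∫ q in Icc x₀ (x₀ + w) ×ˢ Icc (t / n) t, vv g q.1 q.2 * uu g p q.1 q.2
  set C := ∫ x in x₀..(x₀ + w), uu g p x t
  set u := uu g p x₀ t
  constructor
  · have : m * C ≤ E * E * B := by
      calc m * C ≤ m * (w * (E * u)) := by gcongr
        _ = E * (u * (w * m)) := by ring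
        _ ≤ E * (u * A) := by gcongr
        _ ≤ E * (E * B) := by gcongr
        _ = _ := by ring
    calc m * (E * E)⁻¹ * C = (E * E)⁻¹ * (m * C) := by ring
      _ ≤ (E * E)⁻¹ * (E * E * B) := by gcongr
      _ = B := by field_simp
  · calc B ≤ E * u * A := b2
      _ ≤ E * u * (w * M) := by gcongr
      _ = M * E * (w * u) := by ring
      _ ≤ M * E * (E * C) := by gcongr
      _ = _ := by ring

lemma strip_step {g : ℂ → ℂ} (hg : DifferentiableOn ℂ g {z : ℂ | 0 < z.im})
    {K : ℝ} (hK0 : 0 ≤ K) (hK : ∀ z : ℂ, 0 < z.im → 2 * z.im * ‖deriv g z‖ ≤ K)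
    (hper : ∀ z : ℂ, 0 < z.im → g (z + 1) = g z) (p : ℂ)
    {m M : ℝ} (hm : 0 ≤ m) (hmM : m ≤ M) {n t : ℝ} (hn : 2 ≤ n) (ht : 0 < t) (ht1 : t ≤ 1)
    (hbox : ∀ α : ℝ, 1 ≤ α → ∀ x₀ : ℝ,
      m ≤ (∫ z in blochBox x₀ t n α, (2 * z.im * ‖deriv g z‖)^2 / z.im) /
            (α * t * Real.log n) ∧
      (∫ z in blochBox x₀ t n α, (2 * z.im * ‖deriv g z‖)^2 / z.im) /
            (α * t * Real.log n) ≤ M) :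
    m * Real.exp (-(2 * (‖p‖ * (3 * K * n / 2)))) * Real.log n * (‖p‖ ^ 2 / 4) * II g p t ≤
      JJ g p (t / n) - JJ g p t ∧
    JJ g p (t / n) - JJ g p t ≤
      M * Real.exp (2 * (‖p‖ * (3 * K * n / 2))) * Real.log n * (‖p‖ ^ 2 / 4) * II g p t := by
  have hn0 : 0 < n := by linarith
  have hL : 0 < Real.log n := Real.log_pos (by linarith)
  have htn : 0 < t / n := div_pos ht hn0
  have hM : 0 ≤ M := hm.trans hmM
  set N := ⌊1 / t⌋₊ with hNdef
  have h1t : 1 ≤ 1 / t := by rw [le_div_iff₀ ht]; linarith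
  have hN : 0 < N := Nat.floor_pos.mpr h1t
  have hN1 : (1:ℝ) ≤ N := by exact_mod_cast hN
  have hN' : (0:ℝ) < N := by linarith
  have hle : (N:ℝ) ≤ 1 / t := Nat.floor_le (by positivity)
  have hlt : 1 / t < N + 1 := Nat.lt_floor_add_one _
  have hw1 : t ≤ 1 / N := by
    rw [le_div_iff₀ ht] at hle
    rw [le_div_iff₀ hN']; linarith
  have hw2 : (1:ℝ) / N ≤ 2 * t := by
    rw [div_lt_iff₀ ht] at hlt
    rw [div_le_iff₀ hN']; nlinarith
  have hboxk : ∀ x₀ : ℝ,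
      m * Real.exp (-(2 * (‖p‖ * (3 * K * n / 2)))) * Real.log n / 4
        * (∫ x in x₀..(x₀ + 1 / N), uu g p x t) ≤
      ∫ q in Icc x₀ (x₀ + 1 / N) ×ˢ Icc (t / n) t, vv g q.1 q.2 * uu g p q.1 q.2 ∧
      ∫ q in Icc x₀ (x₀ + 1 / N) ×ˢ Icc (t / n) t, vv g q.1 q.2 * uu g p q.1 q.2 ≤
      M * Real.exp (2 * (‖p‖ * (3 * K * n / 2))) * Real.log n / 4
        * (∫ x in x₀..(x₀ + 1 / N), uu g p x t) := by
    intro x₀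
    obtain ⟨b1, b2⟩ := hbox (1 / N / t) (by rw [le_div_iff₀ ht]; linarith) x₀
    rw [box_int g x₀ t n _ ht hn0, div_mul_cancel₀ _ ht.ne'] at b1 b2
    have hw0 : (0:ℝ) < 1 / N := by positivity
    rw [le_div_iff₀ (by positivity)] at b1
    rw [div_le_iff₀ (by positivity)] at b2
    have := box_step hg hK0 hK p (m := m * Real.log n / 4) (M := M * Real.log n / 4) (x₀ := x₀)
      (n := n) (by positivity) (by positivity) ht (by linarith) hw0 hw2 (by linarith) (by linarith)
    constructor
    · convert this.1 using 1; ring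
    · convert this.2 using 1; ring
  have hgreen := green hg hper p htn (div_le_self ht.le (by linarith : 1 ≤ n))
  have hsplit := split_int ((vv_cont hg).mul (uu_cont hg p)) htn hN (d := t)
  have hpt : ∀ k : ℕ, (((k + 1 : ℕ) : ℝ) / N) = (k:ℝ) / N + 1 / N := by
    intro k; push_cast; ring
  have hIsum : ∑ k ∈ Finset.range N, ∫ x in ((k:ℝ) / N)..((k:ℝ) / N + 1 / N), uu g p x t
      = II g p t := by
    have := intervalIntegral.sum_integral_adjacent_intervals (μ := volume)
      (f := fun x => uu g p x t) (a := fun k : ℕ => (k:ℝ) / N) (n := N)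
      (fun k _ => (uu_contx hg p ht).intervalIntegrable _ _)
    simp only [Nat.cast_zero, zero_div, div_self hN'.ne'] at this
    rw [II, ← this]
    simp only [hpt]
  simp only [hpt, Pi.mul_apply] at hsplit
  rw [hgreen, ← hsplit, ← hIsum]
  constructor
  · calc _ = ‖p‖ ^ 2 * ∑ k ∈ Finset.range N,
          (m * Real.exp (-(2 * (‖p‖ * (3 * K * n / 2)))) * Real.log n / 4
            * ∫ x in ((k:ℝ) / N)..((k:ℝ) / N + 1 / N), uu g p x t) := by
          rw [← Finset.mul_sum]; ring
      _ ≤ _ := by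
        gcongr with k _
        exact (hboxk _).1
  · calc _ ≤ ‖p‖ ^ 2 * ∑ k ∈ Finset.range N,
          (M * Real.exp (2 * (‖p‖ * (3 * K * n / 2))) * Real.log n / 4
            * ∫ x in ((k:ℝ) / N)..((k:ℝ) / N + 1 / N), uu g p x t) := by
          gcongr with k _
          exact (hboxk _).2
      _ = _ := by
        rw [← Finset.mul_sum]; ring

lemma J_anti {g : ℂ → ℂ} (hg : DifferentiableOn ℂ g {z : ℂ | 0 < z.im})
    (hper : ∀ z : ℂ, 0 < z.im → g (z + 1) = g z) (p : ℂ) {a b : ℝ} (ha : 0 < a)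
    (hab : a ≤ b) : JJ g p b ≤ JJ g p a := by
  have h := green hg hper p ha hab
  have : 0 ≤ ∫ q in Icc (0:ℝ) 1 ×ˢ Icc a b, vv g q.1 q.2 * uu g p q.1 q.2 := by
    apply setIntegral_nonneg (measurableSet_Icc.prod measurableSet_Icc)
    intro q hq
    exact mul_nonneg (vv_nonneg g q.1 (lt_of_lt_of_le ha hq.2.1)) (uu_pos _ _ _ _).le
  have := mul_nonneg (sq_nonneg ‖p‖) this
  linarith

lemma squeeze_lims {ι : Type*} {F : Filter ι} [F.NeBot] {f lo hi : ι → ℝ} {m M : ℝ}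
    (h1 : ∀ᶠ i in F, lo i ≤ f i) (h2 : ∀ᶠ i in F, f i ≤ hi i)
    (hlo : Tendsto lo F (𝓝 m)) (hhi : Tendsto hi F (𝓝 M)) :
    m ≤ liminf f F ∧ liminf f F ≤ limsup f F ∧ limsup f F ≤ M := by
  have bu : IsBoundedUnder (· ≤ ·) F f := hhi.isBoundedUnder_le.mono_le h2
  have bl : IsBoundedUnder (· ≥ ·) F f := hlo.isBoundedUnder_ge.mono_ge h1
  refine ⟨?_, liminf_le_limsup bu bl, ?_⟩
  · rw [← hlo.liminf_eq]
    exact liminf_le_liminf h1 hlo.isBoundedUnder_ge bu.isCoboundedUnder_ge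
  · rw [← hhi.limsup_eq]
    exact limsup_le_limsup h2 bl.isCoboundedUnder_le hhi.isBoundedUnder_le

lemma tendsto_log_inv : Tendsto (fun y : ℝ => Real.log (1 / y)) (𝓝[>] (0:ℝ)) atTop := by
  simp only [one_div]
  exact Real.tendsto_log_atTop.comp tendsto_inv_nhdsGT_zero

lemma limsup_bounds {φ : ℝ → ℝ} {y₀ c₁ c₂ a b : ℝ} (hy₀ : 0 < y₀)
    (h1 : ∀ y, 0 < y → y ≤ y₀ → c₁ + b * Real.log (1 / y) ≤ φ y)
    (h2 : ∀ y, 0 < y → y ≤ y₀ → φ y ≤ c₂ + a * Real.log (1 / y)) :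
    b ≤ limsup (fun y => φ y / Real.log (1 / y)) (𝓝[>] (0:ℝ)) ∧
      limsup (fun y => φ y / Real.log (1 / y)) (𝓝[>] (0:ℝ)) ≤ a := by
  have hT := tendsto_log_inv
  have hev : ∀ᶠ y in 𝓝[>] (0:ℝ), 0 < y ∧ y ≤ y₀ ∧ 0 < Real.log (1 / y) := by
    filter_upwards [self_mem_nhdsWithin, nhdsWithin_le_nhds (Iic_mem_nhds hy₀),
      hT.eventually_gt_atTop 0] with y hy hy2 hy3
    exact ⟨hy, hy2, hy3⟩
  have hlim : ∀ c d : ℝ, Tendsto (fun y : ℝ => c / Real.log (1 / y) + d) (𝓝[>] (0:ℝ)) (𝓝 d) := by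
    intro c d
    simpa using (hT.const_div_atTop c).add_const d
  have := squeeze_lims (F := 𝓝[>] (0:ℝ)) (f := fun y => φ y / Real.log (1 / y))
    (lo := fun y => c₁ / Real.log (1 / y) + b) (hi := fun y => c₂ / Real.log (1 / y) + a)
    (by
      filter_upwards [hev] with y ⟨hy, hy2, hl⟩
      rw [le_div_iff₀ hl, add_mul, div_mul_cancel₀ _ hl.ne']
      exact h1 y hy hy2)
    (by
      filter_upwards [hev] with y ⟨hy, hy2, hl⟩
      rw [div_le_iff₀ hl, add_mul, div_mul_cancel₀ _ hl.ne']
      exact h2 y hy hy2)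
    (hlim _ _) (hlim _ _)
  exact ⟨this.1.trans this.2.1, this.2.2⟩

lemma growth {J : ℝ → ℝ} {y₀ n A B : ℝ} (hy₀ : 0 < y₀) (hy₀1 : y₀ ≤ 1) (hn : 1 < n)
    (hA : 0 ≤ A) (hB : 0 ≤ B)
    (hpos : ∀ y, 0 < y → 0 < J y) (hanti : ∀ a b, 0 < a → a ≤ b → J b ≤ J a)
    (hlo : ∀ t, 0 < t → t ≤ y₀ → J t * (1 + B * Real.log n) ≤ J (t / n))
    (hhi : ∀ t, 0 < t → t ≤ y₀ → J (t / n) ≤ J t * (1 + A * Real.log n)) :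
    ∀ y, 0 < y → y ≤ y₀ →
      Real.log (J y₀) + B / (1 + B * Real.log n) * (Real.log y₀ - Real.log n) +
          B / (1 + B * Real.log n) * Real.log (1 / y) ≤ Real.log (J y) ∧
      Real.log (J y) ≤ Real.log (J y₀) + A * Real.log n + A * Real.log (1 / y) := by
  intro y hy hyy
  have hn0 : 0 < n := by linarith
  set L := Real.log n with hLdef
  have hL : 0 < L := Real.log_pos hn
  have hsmall : ∀ k : ℕ, 0 < y₀ / n ^ k ∧ y₀ / n ^ k ≤ y₀ := fun k =>
    ⟨by positivity, div_le_self hy₀.le (one_le_pow₀ hn.le)⟩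
  have hdiv : ∀ k : ℕ, y₀ / n ^ (k + 1) = y₀ / n ^ k / n := fun k => by
    rw [pow_succ, div_div]
  have iterlo : ∀ k : ℕ, J y₀ * (1 + B * L) ^ k ≤ J (y₀ / n ^ k) := by
    intro k
    induction k with
    | zero => simp
    | succ k ih =>
      rw [hdiv]
      refine le_trans ?_ (hlo _ (hsmall k).1 (hsmall k).2)
      rw [pow_succ, ← mul_assoc]
      gcongr
  have iterhi : ∀ k : ℕ, J (y₀ / n ^ k) ≤ J y₀ * (1 + A * L) ^ k := by
    intro k
    induction k with
    | zero => simp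
    | succ k ih =>
      rw [hdiv]
      refine le_trans (hhi _ (hsmall k).1 (hsmall k).2) ?_
      rw [pow_succ, ← mul_assoc]
      gcongr
  obtain ⟨k, hk1, hk2⟩ := exists_nat_pow_near (x := y₀ / y) (y := n)
    (by rw [le_div_iff₀ hy]; linarith) hn
  have hJ0 := hpos y₀ hy₀
  have hlogx : Real.log (y₀ / y) = Real.log y₀ + Real.log (1 / y) := by
    rw [Real.log_div hy₀.ne' hy.ne', one_div, Real.log_inv]; ring
  have hly0 : Real.log y₀ ≤ 0 := Real.log_nonpos hy₀.le hy₀1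
  have hxpos : 0 < y₀ / y := by positivity
  have l1 : k * L ≤ Real.log (y₀ / y) := by
    have := Real.log_le_log (by positivity) hk1
    rwa [Real.log_pow] at this
  have l2 : Real.log (y₀ / y) ≤ (k + 1) * L := by
    have := Real.log_le_log hxpos hk2.le
    rw [Real.log_pow] at this
    push_cast at this
    exact this
  have hBL : 0 < 1 + B * L := by positivity
  have hAL : 0 < 1 + A * L := by positivity
  constructor
  · have h1 : J y₀ * (1 + B * L) ^ k ≤ J y := by
      refine (iterlo k).trans (hanti _ _ hy ?_)
      rw [le_div_iff₀ (by positivity)]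
      rw [le_div_iff₀ hy] at hk1
      linarith
    have h2 := Real.log_le_log (by positivity) h1
    rw [Real.log_mul hJ0.ne' (by positivity), Real.log_pow] at h2
    have h3 : B / (1 + B * L) * L ≤ Real.log (1 + B * L) := by
      have := Real.one_sub_inv_le_log_of_pos hBL
      have e : B / (1 + B * L) * L = 1 - (1 + B * L)⁻¹ := by field_simp; ring
      linarith
    have h4 : (k:ℝ) * (B / (1 + B * L) * L) ≤ k * Real.log (1 + B * L) := by gcongr
    have hb : 0 ≤ B / (1 + B * L) := by positivity
    have h5 : B / (1 + B * L) * (Real.log y₀ + Real.log (1 / y)) ≤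
        B / (1 + B * L) * ((k + 1) * L) := by rw [← hlogx]; gcongr
    linarith
  · have h1 : J y ≤ J y₀ * (1 + A * L) ^ (k + 1) := by
      refine le_trans (hanti _ _ (hsmall (k+1)).1 ?_) (iterhi (k + 1))
      rw [div_le_iff₀ (by positivity)]
      rw [div_lt_iff₀ hy] at hk2
      linarith
    have h2 := Real.log_le_log (hpos y hy) h1
    rw [Real.log_mul hJ0.ne' (by positivity), Real.log_pow] at h2
    push_cast at h2
    have h3 : Real.log (1 + A * L) ≤ A * L := by
      have := Real.log_le_sub_one_of_pos hAL
      linarith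
    have h4 : ((k:ℝ) + 1) * Real.log (1 + A * L) ≤ (k + 1) * (A * L) := by gcongr
    have h5 : A * (k * L) ≤ A * Real.log (1 / y) := by
      gcongr
      linarith
    linarith

lemma beta_bounds {g : ℂ → ℂ} (hg : DifferentiableOn ℂ g {z : ℂ | 0 < z.im})
    (hper : ∀ z : ℂ, 0 < z.im → g (z + 1) = g z)
    {K : ℝ} (hK0 : 0 ≤ K) (hK : ∀ z : ℂ, 0 < z.im → 2 * z.im * ‖deriv g z‖ ≤ K)
    {m M : ℝ} (hm : 0 ≤ m) (hmM : m ≤ M)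
    {n : ℝ} (hn : 2 ≤ n) {y₀ : ℝ} (hy₀ : 0 < y₀) (hy₀1 : y₀ ≤ 1)
    (hbox : ∀ α : ℝ, 1 ≤ α → ∀ x₀ t : ℝ, 0 < t → t ≤ y₀ →
      m ≤ (∫ z in blochBox x₀ t n α, (2 * z.im * ‖deriv g z‖)^2 / z.im) /
            (α * t * Real.log n) ∧
      (∫ z in blochBox x₀ t n α, (2 * z.im * ‖deriv g z‖)^2 / z.im) /
            (α * t * Real.log n) ≤ M) (p : ℂ) (hp : p ≠ 0) (hpK : ‖p‖ * K / 2 < 1) :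
    m * Real.exp (-(2 * (‖p‖ * (3 * K * n / 2)))) / (1 + ‖p‖ * K / 2) /
      (1 + m * Real.exp (-(2 * (‖p‖ * (3 * K * n / 2)))) / (1 + ‖p‖ * K / 2) * (‖p‖ ^ 2 / 4)
        * Real.log n) ≤ betaSpec g p / (‖p‖ ^ 2 / 4) ∧
    betaSpec g p / (‖p‖ ^ 2 / 4) ≤
      M * Real.exp (2 * (‖p‖ * (3 * K * n / 2))) / (1 - ‖p‖ * K / 2) := by
  have hn0 : 0 < n := by linarith
  have hL : 0 < Real.log n := Real.log_pos (by linarith)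
  have hM : 0 ≤ M := hm.trans hmM
  have hp0 : 0 < ‖p‖ := norm_pos_iff.mpr hp
  set Q := ‖p‖ ^ 2 / 4 with hQ
  have hQ0 : 0 < Q := by positivity
  set κ := ‖p‖ * K / 2 with hκ
  have hκ0 : 0 ≤ κ := by positivity
  have hκ1 : 0 < 1 - κ := by linarith
  set m' := m * Real.exp (-(2 * (‖p‖ * (3 * K * n / 2)))) with hm'
  set M' := M * Real.exp (2 * (‖p‖ * (3 * K * n / 2))) with hM'
  have hm'0 : 0 ≤ m' := by positivity
  have hM'0 : 0 ≤ M' := by positivity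
  have hIpos := fun y (hy : 0 < y) => I_pos hg p hy
  have hJb := fun y (hy : 0 < y) => J_bounds hg hK p hy
  simp only [← hκ] at hJb
  have hJpos : ∀ y, 0 < y → 0 < JJ g p y := fun y hy =>
    lt_of_lt_of_le (mul_pos hκ1 (hIpos y hy)) (hJb y hy).1
  have hstep := fun t (ht : 0 < t) (hty : t ≤ y₀) =>
    strip_step hg hK0 hK hper p hm hmM hn ht (hty.trans hy₀1)
      (fun α hα x₀ => hbox α hα x₀ t ht hty)
  simp only [← hm', ← hM', ← hQ] at hstep
  have hgr := growth (J := JJ g p) (n := n) (A := M' / (1 - κ) * Q) (B := m' / (1 + κ) * Q)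
    hy₀ hy₀1 (by linarith) (by positivity) (by positivity) hJpos
    (fun a b ha hab => J_anti hg hper p ha hab)
    (fun t ht hty => by
      have h1 := (hstep t ht hty).1
      have h2 : JJ g p t / (1 + κ) ≤ II g p t := by
        rw [div_le_iff₀ (by positivity)]; linarith [(hJb t ht).2]
      have h3 : m' * Real.log n * Q * (JJ g p t / (1 + κ)) ≤ m' * Real.log n * Q * II g p t := by
        gcongr
      have e : JJ g p t * (1 + m' / (1 + κ) * Q * Real.log n) =
        JJ g p t + m' * Real.log n * Q * (JJ g p t / (1 + κ)) := by ring
      linarith)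
    (fun t ht hty => by
      have h1 := (hstep t ht hty).2
      have h2 : II g p t ≤ JJ g p t / (1 - κ) := by
        rw [le_div_iff₀ (by positivity)]; linarith [(hJb t ht).1]
      have h3 : M' * Real.log n * Q * II g p t ≤ M' * Real.log n * Q * (JJ g p t / (1 - κ)) := by
        gcongr
      have e : JJ g p t * (1 + M' / (1 - κ) * Q * Real.log n) =
        JJ g p t + M' * Real.log n * Q * (JJ g p t / (1 - κ)) := by ring
      linarith)
  have hlogI : ∀ y, 0 < y → Real.log (JJ g p y) - Real.log (1 + κ) ≤ Real.log (II g p y) ∧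
      Real.log (II g p y) ≤ Real.log (JJ g p y) - Real.log (1 - κ) := by
    intro y hy
    have a1 := Real.log_le_log (hJpos y hy) (hJb y hy).2
    have a2 := Real.log_le_log (mul_pos hκ1 (hIpos y hy)) (hJb y hy).1
    rw [Real.log_mul (by positivity) (hIpos y hy).ne'] at a1 a2
    constructor <;> linarith
  have hfin := limsup_bounds (φ := fun y => Real.log (II g p y)) (y₀ := y₀)
    (b := m' / (1 + κ) * Q / (1 + m' / (1 + κ) * Q * Real.log n)) (a := M' / (1 - κ) * Q)
    (c₁ := Real.log (JJ g p y₀) + m' / (1 + κ) * Q / (1 + m' / (1 + κ) * Q * Real.log n) *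
      (Real.log y₀ - Real.log n) - Real.log (1 + κ))
    (c₂ := Real.log (JJ g p y₀) + M' / (1 - κ) * Q * Real.log n - Real.log (1 - κ)) hy₀
    (fun y hy hyy => by
      have h1 := (hgr y hy hyy).1
      have h2 := (hlogI y hy).1
      linarith)
    (fun y hy hyy => by
      have h1 := (hgr y hy hyy).2
      have h2 := (hlogI y hy).2
      linarith)
  have hbeta : betaSpec g p =
    limsup (fun y => Real.log (II g p y) / Real.log (1 / y)) (𝓝[>] (0:ℝ)) := rfl
  rw [← hbeta] at hfin
  constructor
  · rw [le_div_iff₀ hQ0]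
    refine le_trans (le_of_eq ?_) hfin.1
    ring
  · rw [div_le_iff₀ hQ0]
    exact hfin.2

theorem stmt0 (g : ℂ → ℂ)
    (hg : DifferentiableOn ℂ g {z : ℂ | 0 < z.im})
    (hper : ∀ z : ℂ, 0 < z.im → g (z + 1) = g z)
    (hbloch : ∃ K : ℝ, ∀ z : ℂ, 0 < z.im → 2 * z.im * ‖deriv g z‖ ≤ K)
    (hdecay : ∀ ε : ℝ, 0 < ε → ∃ Y : ℝ, ∀ x y : ℝ, Y ≤ y →
      ‖g ((x : ℂ) + (y : ℂ) * Complex.I)‖ < ε)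
    (m M : ℝ) (hm : 0 ≤ m) (hmM : m ≤ M)
    (n₀ : ℝ) (hn₀ : 2 ≤ n₀) (y₀ : ℝ) (hy₀ : 0 < y₀) (hy₀1 : y₀ ≤ 1)
    (hbox : ∀ n : ℝ, n₀ ≤ n → ∀ α : ℝ, 1 ≤ α → ∀ x₀ t : ℝ, 0 < t → t ≤ y₀ →
      m ≤ (∫ z in blochBox x₀ t n α, (2 * z.im * ‖deriv g z‖)^2 / z.im) /
            (α * t * Real.log n) ∧
      (∫ z in blochBox x₀ t n α, (2 * z.im * ‖deriv g z‖)^2 / z.im) /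
            (α * t * Real.log n) ≤ M) :
    m ≤ Filter.liminf (fun p : ℂ => betaSpec g p / (‖p‖^2 / 4)) (𝓝[≠] (0:ℂ)) ∧
    Filter.liminf (fun p : ℂ => betaSpec g p / (‖p‖^2 / 4)) (𝓝[≠] (0:ℂ)) ≤
      Filter.limsup (fun p : ℂ => betaSpec g p / (‖p‖^2 / 4)) (𝓝[≠] (0:ℂ)) ∧
    Filter.limsup (fun p : ℂ => betaSpec g p / (‖p‖^2 / 4)) (𝓝[≠] (0:ℂ)) ≤ M := by
  obtain ⟨K, hK⟩ := hbloch
  have hK0 : 0 ≤ K := le_trans (by simp) (hK Complex.I (by simp))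
  have hball : ∀ᶠ p : ℂ in 𝓝[≠] (0:ℂ), p ≠ 0 ∧ ‖p‖ * K / 2 < 1 := by
    have hc : Tendsto (fun p : ℂ => ‖p‖ * K / 2) (𝓝[≠] (0:ℂ)) (𝓝 (‖(0:ℂ)‖ * K / 2)) :=
      (Continuous.tendsto (by fun_prop) 0).mono_left nhdsWithin_le_nhds
    filter_upwards [self_mem_nhdsWithin, hc.eventually_lt_const (show _ < (1:ℝ) by simp)]
      with p h1 h2
    exact ⟨h1, h2⟩
  have hb := fun p (h : p ≠ 0 ∧ ‖p‖ * K / 2 < 1) =>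
    beta_bounds hg hper hK0 hK hm hmM hn₀ hy₀ hy₀1 (hbox n₀ le_rfl) p h.1 h.2
  refine squeeze_lims (hball.mono fun p h => (hb p h).1) (hball.mono fun p h => (hb p h).2) ?_ ?_
  · have hc : ContinuousAt (fun p : ℂ =>
        m * Real.exp (-(2 * (‖p‖ * (3 * K * n₀ / 2)))) / (1 + ‖p‖ * K / 2) /
      (1 + m * Real.exp (-(2 * (‖p‖ * (3 * K * n₀ / 2)))) / (1 + ‖p‖ * K / 2) * (‖p‖ ^ 2 / 4)
        * Real.log n₀)) 0 := by
      have h1 : ContinuousAt (fun p : ℂ =>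
          m * Real.exp (-(2 * (‖p‖ * (3 * K * n₀ / 2)))) / (1 + ‖p‖ * K / 2)) 0 :=
        ContinuousAt.div (by fun_prop) (by fun_prop) (by simp)
      exact h1.div (((h1.mul (by fun_prop)).mul_const _).const_add 1) (by simp)
    have := hc.tendsto.mono_left (nhdsWithin_le_nhds (s := {0}ᶜ))
    simpa using this
  · have hc : ContinuousAt (fun p : ℂ =>
        M * Real.exp (2 * (‖p‖ * (3 * K * n₀ / 2))) / (1 - ‖p‖ * K / 2)) 0 :=
      ContinuousAt.div (by fun_prop) (by fun_prop) (by simp)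
    have := hc.tendsto.mono_left (nhdsWithin_le_nhds (s := {0}ᶜ))
    simpa using this
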